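/- Let A be a commutative ℝ-algebra, let X and Y be ℝ-linear derivations of A (ℝ-linear maps satisfying the Leibniz rule D(ab) = a·D(b) + b·D(a)) with X∘Y = Y∘X, and let f₁, f₂, f₃ ∈ A satisfy X(f₁) = X(f₂) = X(f₃) = 0. Define the ℝ-linear operators U, P : A → A by U(g) = f₁·g + f₂·X(g) and P(g) = Y(g) + f₃·X(g). Let m ≥ 1 be a natural number and G ∈ A. If f₁·Y(G) + (m•Y(f₂) + f₁·f₃)·X(G) + f₂·X(Y(G)) + f₂·f₃·X(X(G)) = -(m•Y(f₁))·G, then P(U^m(G)) = 0, where U^m denotes the m-fold composite of U. -/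

import Mathlib

/-!
The derivation `P = Y + f₃ X` commutes with `X`, because `Y` does and `X f₃ = 0`. Hence
`⁅P, f₁ + f₂ X⁆ = P f₁ + (P f₂) X`, and since `P f₁` and `P f₂` are again constants of `X`, this
commutator commutes with `U = f₁ + f₂ X`. Therefore `P Uᵐ = Uᵐ⁻¹ (U P + m ⁅P, U⁆)`, and the
condition on `G` says that the operator in parentheses annihilates `G`.
-/

theorem lie_pow_of_commute {S : Type*} [Ring S] {a b : S} (h : Commute b ⁅a, b⁆) (n : ℕ) :
    ⁅a, b ^ n⁆ = n • (b ^ (n - 1) * ⁅a, b⁆) := by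
  induction n with
  | zero => simp [Ring.lie_def]
  | succ n ih =>
    have leibniz : ⁅a, b ^ (n + 1)⁆ = ⁅a, b ^ n⁆ * b + b ^ n * ⁅a, b⁆ := by
      simp only [Ring.lie_def, pow_succ]
      noncomm_ring
    have shift : n • (b ^ (n - 1) * ⁅a, b⁆) * b = n • (b ^ n * ⁅a, b⁆) := by
      rcases n with _ | n
      · simp only [zero_smul, zero_mul]
      · rw [smul_mul_assoc, mul_assoc, ← h.eq, ← mul_assoc, Nat.add_sub_cancel, pow_succ]
    rw [leibniz, ih, shift, Nat.add_sub_cancel, succ_nsmul]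

section FirstOrderOp

variable {R A : Type*} [CommSemiring R] [CommRing A] [Algebra R A]

/-- The first-order differential operator `a + b X` along a derivation `X`, acting on `A` by
`g ↦ a * g + b * X g`. -/
def firstOrderOp (X : Derivation R A A) (a b : A) : Module.End R A :=
  LinearMap.mulLeft R a + (b • X : Derivation R A A)

theorem firstOrderOp_apply (X : Derivation R A A) (a b g : A) :
    firstOrderOp X a b g = a * g + b * X g :=
  rfl

variable {X D : Derivation R A A} {a b : A}

theorem commute_firstOrderOp {c d : A} (ha : X a = 0) (hb : X b = 0) (hc : X c = 0)
    (hd : X d = 0) : Commute (firstOrderOp X a b) (firstOrderOp X c d) := by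
  ext g
  simp only [Module.End.mul_apply, firstOrderOp_apply, map_add, Derivation.leibniz, smul_eq_mul,
    ha, hb, hc, hd]
  ring

theorem lie_firstOrderOp (hXD : Function.Commute X D) :
    ⁅(D : Module.End R A), firstOrderOp X a b⁆ = firstOrderOp X (D a) (D b) := by
  ext g
  simp only [Ring.lie_def, LinearMap.sub_apply, Module.End.mul_apply, Derivation.coeFn_coe,
    firstOrderOp_apply, map_add, Derivation.leibniz, smul_eq_mul, hXD.eq]
  ring

theorem apply_apply_eq_zero_of_commute (hXD : Function.Commute X D) (ha : X a = 0) :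
    X (D a) = 0 := by
  rw [hXD.eq, ha, map_zero]

theorem commute_add_smul_self {c : A} (hXD : Function.Commute X D) (hc : X c = 0) :
    Function.Commute X (D + c • X) := by
  intro g
  simp [hXD.eq, hc]

theorem derivation_apply_iterate_firstOrderOp (hXD : Function.Commute X D) (ha : X a = 0)
    (hb : X b = 0) {m : ℕ} (hm : m ≠ 0) (g : A) :
    D ((firstOrderOp X a b)^[m] g) = (firstOrderOp X a b)^[m - 1]
      (firstOrderOp X a b (D g) + m • firstOrderOp X (D a) (D b) g) := by
  set U := firstOrderOp X a b
  have lie_eq : ⁅(D : Module.End R A), U⁆ = firstOrderOp X (D a) (D b) := lie_firstOrderOp hXD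
  have lie_pow : ⁅(D : Module.End R A), U ^ m⁆ = m • (U ^ (m - 1) * ⁅(D : Module.End R A), U⁆) := by
    apply lie_pow_of_commute
    rw [lie_eq]
    exact commute_firstOrderOp ha hb (apply_apply_eq_zero_of_commute hXD ha)
      (apply_apply_eq_zero_of_commute hXD hb)
  have factor : (D : Module.End R A) * U ^ m =
      U ^ (m - 1) * (U * D + m • firstOrderOp X (D a) (D b)) := by
    rw [mul_add, ← mul_assoc, pow_sub_one_mul hm, mul_smul_comm, ← lie_eq, ← lie_pow, Ring.lie_def,
      add_sub_cancel]
  simpa only [Module.End.mul_apply, Module.End.pow_apply, LinearMap.add_apply,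
    LinearMap.smul_apply, Derivation.coeFn_coe] using LinearMap.congr_fun factor g

theorem stmt_9_general {f₁ f₂ f₃ : A} (X Y : Derivation R A A) (hXY : Function.Commute X Y)
    (h1 : X f₁ = 0) (h2 : X f₂ = 0) (h3 : X f₃ = 0) {m : ℕ} (hm : m ≠ 0) {G : A}
    (hG : f₁ * Y G + (m • Y f₂ + f₁ * f₃) * X G + f₂ * X (Y G) + f₂ * f₃ * X (X G)
        = -(m • Y f₁) * G) :
    (Y + f₃ • X) ((firstOrderOp X f₁ f₂)^[m] G) = 0 := by
  have annihilates : firstOrderOp X f₁ f₂ ((Y + f₃ • X) G) +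
      m • firstOrderOp X ((Y + f₃ • X) f₁) ((Y + f₃ • X) f₂) G = 0 := by
    simp only [firstOrderOp_apply, Derivation.add_apply, Derivation.smul_apply, smul_eq_mul,
      map_add, Derivation.leibniz, h1, h2, h3, nsmul_eq_mul] at hG ⊢
    linear_combination hG
  rw [derivation_apply_iterate_firstOrderOp (commute_add_smul_self hXY h3) h1 h2 hm,
    annihilates, Function.iterate_fixed (map_zero _)]

end FirstOrderOp

/-- Sufficiency part of the final Proposition of Section 2: the displayed
condition on `G` guarantees `P(Uᵐ G) = 0`. -/
theorem stmt_9 {A : Type*} [CommRing A] [Algebra ℝ A]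
    (X Y : A →ₗ[ℝ] A)
    (hX : ∀ a b : A, X (a * b) = a * X b + b * X a)
    (hY : ∀ a b : A, Y (a * b) = a * Y b + b * Y a)
    (hXY : ∀ a : A, X (Y a) = Y (X a))
    (f₁ f₂ f₃ : A) (h1 : X f₁ = 0) (h2 : X f₂ = 0) (h3 : X f₃ = 0)
    (U P : A → A)
    (hU : ∀ g, U g = f₁ * g + f₂ * X g)
    (hP : ∀ g, P g = Y g + f₃ * X g)
    (m : ℕ) (hm : 1 ≤ m) (G : A)
    (hG : f₁ * Y G + (m • Y f₂ + f₁ * f₃) * X G + f₂ * X (Y G) + f₂ * f₃ * X (X G)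
        = -(m • Y f₁) * G) :
    P (U^[m] G) = 0 := by
  obtain rfl : U = firstOrderOp (Derivation.mk' X hX) f₁ f₂ := funext hU
  rw [hP]
  exact stmt_9_general (Derivation.mk' X hX) (Derivation.mk' Y hY) hXY h1 h2 h3
    (Nat.one_le_iff_ne_zero.mp hm) hG
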